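/- arXiv:2306.17402 — 5 statements merged into one kernel-verified Lean document; each statement's English description precedes it below -/
import Mathlib

section
/- For every natural number n ≥ 1 and all real numbers a, b, ν({1, 2, …, n, a, b}) = (a+b)·( n(n+1) + (a+b) − (a² − ab + b²) ). Consequently, if a + b ≠ 0 then ν({1, 2, …, n, a, b}) = 0 if and only if a² − ab + b² − a − b = n(n+1); and under the substitution a = u+v+1, b = u−v+1 this last equation is equivalent to u² + 3v² = n² + n + 1. -/
/-!
By Nicomachus' identity `1³ + ⋯ + n³ = (1 + ⋯ + n)²`, the multiset `{1, …, n}` has `ν = 0`.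
Writing `S = n(n+1)/2` for its sum, adjoining `a, b` gives
`ν = (S + a + b)² - S² - a³ - b³ = (a + b)(2S + (a + b) - (a² - ab + b²))`,
and everything else is elementary algebra: cancel the factor `a + b`, and note that
`a² - ab + b² - a - b = u² + 3v² - 1` for `a = u + v + 1`, `b = u - v + 1`.
-/

/-- ν of a finite multiset of reals. -/
def nu (σ : Multiset ℝ) : ℝ := σ.sum ^ 2 - (σ.map (fun x => x ^ 3)).sum

/-- The elaborator coerces the multiset `Multiset.Icc 1 n` of naturals to `Multiset ℝ` through the
monadic bind; this identifies the result with the image under the cast `ℕ → ℝ`. -/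
theorem map_Icc_eq (n : ℕ) :
    (Multiset.Icc 1 n).map (fun i => (i : ℝ)) = (Multiset.Icc 1 n).map (Nat.cast : ℕ → ℝ) := by
  simp only [Multiset.map_id', Multiset.bind_def, Multiset.pure_def, Multiset.bind_singleton]

theorem sum_Icc_cast (n : ℕ) :
    ((Multiset.Icc 1 n).map (fun i => (i : ℝ))).sum = (n : ℝ) * (n + 1) / 2 := by
  rw [map_Icc_eq]
  change ∑ i ∈ Finset.Icc 1 n, (i : ℝ) = _
  induction n with
  | zero => simp
  | succ k ih =>
    rw [Finset.sum_Icc_succ_top (by omega), ih]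
    push_cast
    ring

theorem sum_Icc_cast_cube (n : ℕ) :
    (((Multiset.Icc 1 n).map (fun i => (i : ℝ))).map (fun x => x ^ 3)).sum
      = ((n : ℝ) * (n + 1) / 2) ^ 2 := by
  rw [map_Icc_eq, Multiset.map_map]
  change ∑ i ∈ Finset.Icc 1 n, (i : ℝ) ^ 3 = _
  induction n with
  | zero => simp
  | succ k ih =>
    rw [Finset.sum_Icc_succ_top (by omega), ih]
    push_cast
    ring

/-- Adjoining {a, b} to {1, 2, …, n}: factorization of ν, vanishing criterion when
a + b ≠ 0, and the quadratic-form reformulation via a = u+v+1, b = u−v+1. -/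
theorem stmt_3 (n : ℕ) (hn : 1 ≤ n) (a b : ℝ) :
    (nu (a ::ₘ b ::ₘ (Multiset.Icc 1 n).map (fun i => (i : ℝ)))
        = (a + b) * ((n : ℝ) * ((n : ℝ) + 1) + (a + b) - (a ^ 2 - a * b + b ^ 2))) ∧
    (a + b ≠ 0 →
      (nu (a ::ₘ b ::ₘ (Multiset.Icc 1 n).map (fun i => (i : ℝ))) = 0
        ↔ a ^ 2 - a * b + b ^ 2 - a - b = (n : ℝ) * ((n : ℝ) + 1))) ∧
    (∀ u v : ℝ, a = u + v + 1 → b = u - v + 1 →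
      (a ^ 2 - a * b + b ^ 2 - a - b = (n : ℝ) * ((n : ℝ) + 1)
        ↔ u ^ 2 + 3 * v ^ 2 = (n : ℝ) ^ 2 + (n : ℝ) + 1)) := by
  have key : nu (a ::ₘ b ::ₘ (Multiset.Icc 1 n).map (fun i => (i : ℝ)))
      = (a + b) * ((n : ℝ) * ((n : ℝ) + 1) + (a + b) - (a ^ 2 - a * b + b ^ 2)) := by
    unfold nu
    simp only [Multiset.map_cons, Multiset.sum_cons]
    rw [sum_Icc_cast, sum_Icc_cast_cube]
    ring
  refine ⟨key, fun hab => ?_, ?_⟩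
  · rw [key, mul_eq_zero, or_iff_right hab]
    constructor <;> intro h <;> linarith
  · rintro u v rfl rfl
    constructor <;> intro h <;> linarith
end

section
/- For every integer m ≥ 2, let σ_m denote the multiset {1, 2, 2, 3, 4, 5, …, m−1, m, m+2} (the integers 1 through m with 2 repeated twice, together with m+2). Then for every real t, ν(σ_m + t) = t·( −2(2+t)² − (1/2)(t−1)(3+2t)m − (1/2)(t−1)m² ). In particular ν(σ_m) = 0, and ν(σ_m + 1) = −18 for every such m. -/
/-- The multiset σ_m = {1, 2, 2, 3, …, m, m+2}. -/
def sigma_m (m : ℕ) : Multiset ℝ :=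
  (2 : ℝ) ::ₘ ((m : ℝ) + 2) ::ₘ (Multiset.Icc 1 m).map (fun i => (i : ℝ))

theorem sum_shift (m : ℕ) (t : ℝ) :
    ∑ i ∈ Finset.Icc 1 m, ((i : ℝ) + t) = (m : ℝ) * (m + 1) / 2 + m * t := by
  induction m with
  | zero => simp
  | succ k ih =>
    rw [Finset.sum_Icc_succ_top (by omega), ih]
    push_cast
    ring

theorem sum_shift_cube (m : ℕ) (t : ℝ) :
    ∑ i ∈ Finset.Icc 1 m, ((i : ℝ) + t) ^ 3 =
      ((m : ℝ) * (m + 1) / 2) ^ 2 + 3 * t * ((m : ℝ) * (m + 1) * (2 * m + 1) / 6)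
        + 3 * t ^ 2 * ((m : ℝ) * (m + 1) / 2) + m * t ^ 3 := by
  induction m with
  | zero => simp
  | succ k ih =>
    rw [Finset.sum_Icc_succ_top (by omega), ih]
    push_cast
    ring

theorem nu_sigma_m_shift (m : ℕ) (t : ℝ) :
    nu ((sigma_m m).map (fun x => x + t))
      = t * (-2 * (2 + t) ^ 2 - (1 / 2) * (t - 1) * (3 + 2 * t) * (m : ℝ)
          - (1 / 2) * (t - 1) * (m : ℝ) ^ 2) := by
  have h1 : ((Multiset.Icc 1 m).map (fun i : ℕ => (i : ℝ) + t)).sum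
      = (m : ℝ) * (m + 1) / 2 + m * t := sum_shift m t
  have h3 : ((Multiset.Icc 1 m).map (fun i : ℕ => ((i : ℝ) + t) ^ 3)).sum
      = _ := sum_shift_cube m t
  -- In `sigma_m` the cast of `Multiset.Icc 1 m` to reals is a monadic lift; the `bind` and `pure`
  -- lemmas turn it into a `Multiset.map`.
  simp only [nu, sigma_m, Multiset.map_cons, Multiset.sum_cons, Multiset.bind_def,
    Multiset.pure_def, Multiset.bind_singleton, Multiset.map_map, Function.comp_def]
  rw [h1, h3]
  ring

/-- Translation identity for σ_m, together with ν(σ_m) = 0 and ν(σ_m + 1) = −18. -/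
theorem stmt_5 (m : ℕ) (hm : 2 ≤ m) :
    (∀ t : ℝ, nu ((sigma_m m).map (fun x => x + t))
        = t * (-2 * (2 + t) ^ 2 - (1 / 2) * (t - 1) * (3 + 2 * t) * (m : ℝ)
            - (1 / 2) * (t - 1) * (m : ℝ) ^ 2)) ∧
    nu (sigma_m m) = 0 ∧
    nu ((sigma_m m).map (fun x => x + 1)) = -18 := by
  refine ⟨nu_sigma_m_shift m, ?_, ?_⟩
  · simpa using nu_sigma_m_shift m 0
  · rw [nu_sigma_m_shift m 1]
    ring
end

section
/- Let a₁, …, aₙ be real numbers and let x₁, x₂, x₃, … be nonzero real numbers with x_j ≠ −x_{j−1} for every j ≥ 2. Suppose that for every j ≥ 1 the multiset {a₁, …, aₙ, x₁, …, x_j} satisfies ν = 0. Then the numbers x₂, x₃, x₄, … form an arithmetic progression with common difference 1; that is, x_{l+1} = x_l + 1 for every l ≥ 2. -/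
/-- Adjoining a nonzero `y` to a multiset without changing `ν` forces
`2 * (old sum) + y = y ^ 2`, since `(S + y) ^ 2 - S ^ 2 = y ^ 3`. -/
theorem nu_cons_step (σ : Multiset ℝ) (y : ℝ) (hy : y ≠ 0)
    (h : nu σ = 0) (h' : nu (y ::ₘ σ) = 0) : 2 * σ.sum + y = y ^ 2 := by
  simp only [nu, Multiset.sum_cons, Multiset.map_cons] at h h'
  apply mul_left_cancel₀ hy
  linear_combination h' - h

/-- If nonzero reals x₁, x₂, … (with x_j ≠ −x_{j−1}) are successively adjoined to a
finite sequence so that every resulting multiset has ν = 0, then x₂, x₃, x₄, … is an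
arithmetic progression with common difference 1. -/
theorem stmt_15 (a : Multiset ℝ) (x : ℕ → ℝ)
    (hx0 : ∀ j, 1 ≤ j → x j ≠ 0)
    (hx1 : ∀ j, 2 ≤ j → x j ≠ -x (j - 1))
    (hnu : ∀ j, 1 ≤ j → nu (a + (Multiset.range j).map (fun i => x (i + 1))) = 0) :
    ∀ l, 2 ≤ l → x (l + 1) = x l + 1 := by
  intro l hl
  obtain ⟨k, rfl⟩ : ∃ k, l = k + 2 := ⟨l - 2, by omega⟩
  have hstep : ∀ j, a + (Multiset.range (j + 1)).map (fun i => x (i + 1)) =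
      x (j + 1) ::ₘ (a + (Multiset.range j).map (fun i => x (i + 1))) := by
    intro j
    simp
  have h1 := hnu (k + 1) (by omega)
  have h2 := hnu (k + 2) (by omega)
  have h3 := hnu (k + 3) (by omega)
  rw [hstep (k + 2)] at h3
  have e2 := nu_cons_step _ _ (hx0 (k + 3) (by omega)) h2 h3
  rw [hstep (k + 1)] at h2 e2
  have e1 := nu_cons_step _ _ (hx0 (k + 2) (by omega)) h1 h2
  rw [Multiset.sum_cons] at e2
  have hne : x (k + 3) + x (k + 2) ≠ 0 := fun h =>
    hx1 (k + 3) (by omega) (eq_neg_of_add_eq_zero_left h)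
  -- Subtracting the two step relations leaves a product with factor `x (k + 3) + x (k + 2)`.
  apply mul_left_cancel₀ hne
  linear_combination e1 - e2
end

section
/- For every positive integer n and all real numbers a and s, the multiset S consisting of n copies of n together with the arithmetic progression a, a+s, a+2s, …, a+(n−1)s satisfies ν(S) = ( n·a + (1/2)·n(n−1)·s )·( 2n² + n·a − a² + (1/2)·n(n−1)·(s − s²) − (n−1)·a·s ). -/
theorem sum_progression (n : ℕ) (a s : ℝ) :
    ((Multiset.range n).map (fun i : ℕ => a + (i : ℝ) * s)).sum
      = (n : ℝ) * a + (1 / 2) * (n : ℝ) * ((n : ℝ) - 1) * s := by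
  induction n with
  | zero => simp
  | succ k ih =>
    rw [Multiset.range_succ, Multiset.map_cons, Multiset.sum_cons, ih]
    push_cast
    ring

theorem sum_progression_cubes (n : ℕ) (a s : ℝ) :
    ((Multiset.range n).map (fun i : ℕ => (a + (i : ℝ) * s) ^ 3)).sum
      = ((n : ℝ) * a + (1 / 2) * (n : ℝ) * ((n : ℝ) - 1) * s)
        * (a ^ 2 + ((n : ℝ) - 1) * a * s + (1 / 2) * (n : ℝ) * ((n : ℝ) - 1) * s ^ 2) := by
  induction n with
  | zero => simp
  | succ k ih =>
    rw [Multiset.range_succ, Multiset.map_cons, Multiset.sum_cons, ih]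
    push_cast
    ring

/-- ν of n copies of n joined with the arithmetic progression a, a+s, …, a+(n−1)s. -/
theorem stmt_16 (n : ℕ) (hn : 1 ≤ n) (a s : ℝ) :
    nu (Multiset.replicate n (n : ℝ) + (Multiset.range n).map (fun i => a + (i : ℝ) * s))
      = ((n : ℝ) * a + (1 / 2) * (n : ℝ) * ((n : ℝ) - 1) * s)
        * (2 * (n : ℝ) ^ 2 + (n : ℝ) * a - a ^ 2
            + (1 / 2) * (n : ℝ) * ((n : ℝ) - 1) * (s - s ^ 2) - ((n : ℝ) - 1) * a * s) := by
  -- `Multiset.range n` is lifted to `Multiset ℝ` by a monadic bind, which is the map of the cast.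
  simp only [nu, Multiset.bind_def, Multiset.pure_def, Multiset.bind_singleton,
    Multiset.sum_add, Multiset.map_add, Multiset.map_replicate, Multiset.sum_replicate,
    Multiset.map_map, Function.comp_def, sum_progression, sum_progression_cubes, nsmul_eq_mul]
  ring
end

section
/- Let F_k denote the Fibonacci numbers (F₁ = F₂ = 1). For a positive integer n, there exists a positive integer a with n² + (1 − a)·n − a² + 2a = 0 if and only if n = F_{2k} for some positive integer k; moreover, in that case the unique positive solution is a = F_{2k−1} + 1, i.e., (1/2)·(2 − F_{2k} + √(5·F_{2k}² + 4)) = F_{2k−1} + 1. -/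
/-!
With `b = a - 1` the equation becomes `b² + b n = n² + 1`. The pairs
`(b, n) = (F_{2m+1}, F_{2m+2})` solve it (`fib_norm`, a form of Cassini's identity). Conversely,
a solution with `n > 0` is either `(1, 1)` or descends to the smaller solution
`(2b - n, n - b)`, which reverses two steps of the Fibonacci recurrence; hence every solution is
of this form (`eq_fib_of_norm`). For fixed `n` the left-hand side is strictly increasing in
`b ≥ 0`, which gives uniqueness, and completing the square, `(2b + n)² = 5n² + 4`, gives the
closed form.
-/

theorem fib_norm (m : ℕ) :
    Nat.fib (2 * m + 1) ^ 2 + Nat.fib (2 * m + 1) * Nat.fib (2 * m + 2)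
      = Nat.fib (2 * m + 2) ^ 2 + 1 := by
  induction m with
  | zero => simp
  | succ m ih =>
    have h3 : Nat.fib (2 * (m + 1) + 1) = Nat.fib (2 * m + 1) + Nat.fib (2 * m + 2) :=
      Nat.fib_add_two (n := 2 * m + 1)
    have h4 : Nat.fib (2 * (m + 1) + 2) = Nat.fib (2 * m + 2) + Nat.fib (2 * (m + 1) + 1) :=
      Nat.fib_add_two (n := 2 * m + 2)
    rw [h4, h3]
    linarith

theorem eq_fib_of_norm (n : ℕ) : ∀ b : ℕ, 0 < n → b ^ 2 + b * n = n ^ 2 + 1 →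
    ∃ m : ℕ, n = Nat.fib (2 * m + 2) ∧ b = Nat.fib (2 * m + 1) := by
  induction n using Nat.strong_induction_on with
  | _ n ih =>
    intro b hn h
    have hb : 0 < b := by
      rcases Nat.eq_zero_or_pos b with rfl | hb
      · simp at h
      · exact hb
    have hbn : b ≤ n := by
      by_contra! hlt
      nlinarith
    obtain ⟨c, rfl⟩ := Nat.exists_eq_add_of_le hbn
    rcases Nat.eq_zero_or_pos c with rfl | hc
    · exact ⟨0, by norm_num; nlinarith, by norm_num; nlinarith⟩
    · have hcb : c < b := by
        by_contra! hle
        nlinarith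
      obtain ⟨d, rfl⟩ := Nat.exists_eq_add_of_le hcb.le
      -- Here `c = n - b` and `d = 2b - n`.
      obtain ⟨m, h1, h2⟩ := ih c (by omega) d hc (by linarith)
      have h3 : Nat.fib (2 * (m + 1) + 1) = Nat.fib (2 * m + 1) + Nat.fib (2 * m + 2) :=
        Nat.fib_add_two (n := 2 * m + 1)
      have h4 : Nat.fib (2 * (m + 1) + 2) = Nat.fib (2 * m + 2) + Nat.fib (2 * (m + 1) + 1) :=
        Nat.fib_add_two (n := 2 * m + 2)
      exact ⟨m + 1, by omega, by omega⟩

theorem quadratic_iff_norm (n b : ℕ) :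
    ((n : ℤ) ^ 2 + (1 - ((b + 1 : ℕ) : ℤ)) * (n : ℤ) - ((b + 1 : ℕ) : ℤ) ^ 2
      + 2 * ((b + 1 : ℕ) : ℤ) = 0) ↔ b ^ 2 + b * n = n ^ 2 + 1 := by
  zify
  constructor <;> intro h <;> linarith

/-- The quadratic n² + (1−a)n − a² + 2a = 0 has a positive integer solution a iff
n = F_{2k}; in that case the unique positive solution is a = F_{2k−1} + 1, i.e.
(1/2)(2 − F_{2k} + √(5F_{2k}² + 4)) = F_{2k−1} + 1.
Here `Nat.fib` satisfies fib 1 = fib 2 = 1. -/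
theorem stmt_17 (n : ℕ) (hn : 0 < n) :
    ((∃ a : ℕ, 0 < a ∧ (n : ℤ) ^ 2 + (1 - (a : ℤ)) * (n : ℤ) - (a : ℤ) ^ 2 + 2 * (a : ℤ) = 0)
      ↔ ∃ k : ℕ, 0 < k ∧ n = Nat.fib (2 * k)) ∧
    (∀ k : ℕ, 0 < k → ∀ a : ℕ, 0 < a →
      ((Nat.fib (2 * k) : ℤ) ^ 2 + (1 - (a : ℤ)) * (Nat.fib (2 * k) : ℤ)
          - (a : ℤ) ^ 2 + 2 * (a : ℤ) = 0
        ↔ a = Nat.fib (2 * k - 1) + 1)) ∧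
    (∀ k : ℕ, 0 < k →
      (1 / 2 : ℝ) * (2 - (Nat.fib (2 * k) : ℝ)
          + Real.sqrt (5 * (Nat.fib (2 * k) : ℝ) ^ 2 + 4))
        = (Nat.fib (2 * k - 1) : ℝ) + 1) := by
  refine ⟨⟨?_, ?_⟩, ?_, ?_⟩
  · rintro ⟨a, ha, h⟩
    obtain ⟨b, rfl⟩ := Nat.exists_eq_succ_of_ne_zero ha.ne'
    obtain ⟨m, h1, -⟩ := eq_fib_of_norm n b hn ((quadratic_iff_norm n b).1 h)
    exact ⟨m + 1, m.succ_pos, h1⟩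
  · rintro ⟨k, hk, rfl⟩
    obtain ⟨m, rfl⟩ := Nat.exists_eq_succ_of_ne_zero hk.ne'
    exact ⟨Nat.fib (2 * m + 1) + 1, Nat.succ_pos _, (quadratic_iff_norm _ _).2 (fib_norm m)⟩
  · intro k hk a ha
    obtain ⟨m, rfl⟩ := Nat.exists_eq_succ_of_ne_zero hk.ne'
    obtain ⟨b, rfl⟩ := Nat.exists_eq_succ_of_ne_zero ha.ne'
    have hf := fib_norm m
    refine (quadratic_iff_norm (Nat.fib (2 * m + 2)) b).trans ?_
    change _ ↔ b + 1 = Nat.fib (2 * m + 1) + 1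
    rw [Nat.add_right_cancel_iff]
    constructor
    · intro h
      rcases lt_trichotomy b (Nat.fib (2 * m + 1)) with hlt | heq | hgt
      · nlinarith
      · exact heq
      · nlinarith
    · rintro rfl
      exact hf
  · intro k hk
    obtain ⟨m, rfl⟩ := Nat.exists_eq_succ_of_ne_zero hk.ne'
    change (1 / 2 : ℝ) * (2 - (Nat.fib (2 * m + 2) : ℝ)
      + Real.sqrt (5 * (Nat.fib (2 * m + 2) : ℝ) ^ 2 + 4)) = (Nat.fib (2 * m + 1) : ℝ) + 1
    have hf : (Nat.fib (2 * m + 1) : ℝ) ^ 2 + Nat.fib (2 * m + 1) * Nat.fib (2 * m + 2)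
        = (Nat.fib (2 * m + 2) : ℝ) ^ 2 + 1 := by
      exact_mod_cast fib_norm m
    have hs : 5 * (Nat.fib (2 * m + 2) : ℝ) ^ 2 + 4
        = (2 * Nat.fib (2 * m + 1) + Nat.fib (2 * m + 2)) ^ 2 := by
      linarith
    rw [hs, Real.sqrt_sq (by positivity)]
    ring
end
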